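/- arXiv:2306.07587 — 2 statements merged into one kernel-verified Lean document; each statement's English description precedes it below -/
import Mathlib

section
/- Let p be a real polynomial in n variables, homogeneous of degree d, hyperbolic in direction e ∈ ℝⁿ with p(e) > 0, and suppose the hyperbolicity cone Λ₊ is regular (contains no nonzero linear subspace). Then for every e' ∈ Λ₊₊, the Hessian H(e') of f(x) = −ln p(x) at e' is positive definite; in particular f is strictly convex on Λ₊₊. -/
open scoped BigOperators

/-- The univariate polynomial `t ↦ p(t • e - x)` associated to a multivariate polynomial `p`,
a direction `e` and a point `x`. -/
noncomputable def hypCharPoly {n : ℕ} (p : MvPolynomial (Fin n) ℝ) (e x : Fin n → ℝ) :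
    Polynomial ℝ :=
  MvPolynomial.aeval (fun i => Polynomial.C (e i) * Polynomial.X - Polynomial.C (x i)) p

/-- `p` is a homogeneous polynomial of degree `d`, hyperbolic in direction `e`:
`p(e) ≠ 0` and for every `x` the polynomial `t ↦ p(t • e - x)` has `d` real roots
counted with multiplicity. -/
def IsHyperbolicPoly {n : ℕ} (p : MvPolynomial (Fin n) ℝ) (e : Fin n → ℝ) (d : ℕ) : Prop :=
  p.IsHomogeneous d ∧ MvPolynomial.eval e p ≠ 0 ∧
    ∀ x : Fin n → ℝ, Multiset.card (hypCharPoly p e x).roots = d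

/-- The (closed) hyperbolicity cone `Λ₊`: all hyperbolic eigenvalues are nonnegative. -/
def hypConeClosed {n : ℕ} (p : MvPolynomial (Fin n) ℝ) (e : Fin n → ℝ) : Set (Fin n → ℝ) :=
  {x | ∀ r ∈ (hypCharPoly p e x).roots, (0:ℝ) ≤ r}

/-- The open hyperbolicity cone `Λ₊₊`: all hyperbolic eigenvalues are positive. -/
def hypConeOpen {n : ℕ} (p : MvPolynomial (Fin n) ℝ) (e : Fin n → ℝ) : Set (Fin n → ℝ) :=
  {x | ∀ r ∈ (hypCharPoly p e x).roots, (0:ℝ) < r}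

/-- The gradient of `f(x) = -ln p(x)`, namely `g(x)ᵢ = -(∂ᵢ p)(x) / p(x)`. -/
noncomputable def gradNegLog {n : ℕ} (p : MvPolynomial (Fin n) ℝ) (x : Fin n → ℝ) :
    Fin n → ℝ :=
  fun i => -(MvPolynomial.eval x (MvPolynomial.pderiv i p)) / MvPolynomial.eval x p

/-- The Hessian of `f(x) = -ln p(x)`, namely
`H(x)ᵢⱼ = (∂ᵢp)(x)(∂ⱼp)(x)/p(x)² - (∂ᵢ∂ⱼp)(x)/p(x)`. -/
noncomputable def hessNegLog {n : ℕ} (p : MvPolynomial (Fin n) ℝ) (x : Fin n → ℝ) :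
    Matrix (Fin n) (Fin n) ℝ :=
  Matrix.of fun i j =>
    MvPolynomial.eval x (MvPolynomial.pderiv i p) * MvPolynomial.eval x (MvPolynomial.pderiv j p)
        / (MvPolynomial.eval x p) ^ 2
      - MvPolynomial.eval x (MvPolynomial.pderiv i (MvPolynomial.pderiv j p))
        / MvPolynomial.eval x p

/-- The local inner product `⟨u, v⟩_{e'} = uᵀ H(e') v`. -/
noncomputable def localIP {n : ℕ} (p : MvPolynomial (Fin n) ℝ) (e' u v : Fin n → ℝ) : ℝ :=
  ∑ i, ∑ j, u i * hessNegLog p e' i j * v j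

/-- The local norm `‖v‖_{e'} = ⟨v, v⟩_{e'}^{1/2}`. -/
noncomputable def localNorm {n : ℕ} (p : MvPolynomial (Fin n) ℝ) (e' v : Fin n → ℝ) : ℝ :=
  Real.sqrt (localIP p e' v v)

/-- The closed quadratic cone `K_{e'}(α) = {x : ⟨e', x⟩_{e'} ≥ α ‖x‖_{e'}}`. -/
noncomputable def quadCone {n : ℕ} (p : MvPolynomial (Fin n) ℝ) (e' : Fin n → ℝ) (α : ℝ) :
    Set (Fin n → ℝ) :=
  {x | α * localNorm p e' x ≤ localIP p e' e' x}

/-- The hyperbolicity cone is regular: it contains no nonzero linear subspace. -/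
def IsRegularCone {n : ℕ} (p : MvPolynomial (Fin n) ℝ) (e : Fin n → ℝ) : Prop :=
  ∀ W : Submodule ℝ (Fin n → ℝ), (W : Set (Fin n → ℝ)) ⊆ hypConeClosed p e → W = ⊥


namespace MvPolynomial

theorem aeval_smul_of_isHomogeneous {σ K : Type*} [CommRing K] [Algebra ℝ K] {d : ℕ}
    {p : MvPolynomial σ ℝ} (hp : p.IsHomogeneous d) (c : K) (z : σ → K) :
    aeval (c • z) p = c ^ d * aeval z p := by
  simp only [aeval_def, eval₂_eq, Finset.mul_sum]
  refine Finset.sum_congr rfl fun m hm => ?_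
  simp only [Pi.smul_apply, smul_eq_mul, mul_pow, Finset.prod_mul_distrib,
    Finset.prod_pow_eq_pow_sum]
  rw [← hp.degree_eq_sum_deg_support hm]
  ring

theorem continuous_aeval_complex {σ : Type*} (p : MvPolynomial σ ℝ) :
    Continuous fun z : σ → ℂ => aeval z p := by
  simp only [aeval_def, ← eval_map]
  exact continuous_eval _

theorem aeval_ofReal {σ : Type*} (p : MvPolynomial σ ℝ) (x : σ → ℝ) :
    aeval (fun i => (x i : ℂ)) p = (eval x p : ℂ) := by
  have := aeval_algebraMap_apply ℂ x p
  simpa [Function.comp_def, aeval_eq_eval] using this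

end MvPolynomial

/-- The restriction `t ↦ p(g + t a)` of a real polynomial to a line, over an `ℝ`-algebra. -/
noncomputable def linePoly {n : ℕ} {K : Type*} [CommRing K] [Algebra ℝ K]
    (p : MvPolynomial (Fin n) ℝ) (g a : Fin n → K) : Polynomial K :=
  MvPolynomial.aeval (fun i => Polynomial.C (g i) + Polynomial.C (a i) * Polynomial.X) p

section LinePoly

variable {n d : ℕ} {p : MvPolynomial (Fin n) ℝ}

theorem eval_linePoly {K : Type*} [CommRing K] [Algebra ℝ K] (g a : Fin n → K) (t : K) :
    (linePoly p g a).eval t = MvPolynomial.aeval (g + t • a) p := by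
  rw [linePoly, ← Polynomial.coe_aeval_eq_eval]
  have := MvPolynomial.comp_aeval_apply
    (fun i => Polynomial.C (g i) + Polynomial.C (a i) * Polynomial.X)
    ((Polynomial.aeval t : Polynomial K →ₐ[K] K).restrictScalars ℝ) p
  simp only [AlgHom.restrictScalars_apply] at this
  refine this.trans ?_
  congr 2
  ext i
  rw [Polynomial.coe_aeval_eq_eval]
  simp only [Polynomial.eval_add, Polynomial.eval_mul, Polynomial.eval_C, Polynomial.eval_X,
    Pi.add_apply, Pi.smul_apply, smul_eq_mul, mul_comm t]

theorem natDegree_linePoly_le (hp : p.IsHomogeneous d) {K : Type*} [CommRing K] [Algebra ℝ K]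
    (g a : Fin n → K) : (linePoly p g a).natDegree ≤ d := by
  have := MvPolynomial.aeval_natDegree_le (n := 1) _ (hp.map (algebraMap ℝ K)).totalDegree_le
    (fun i => Polynomial.C (g i) + Polynomial.C (a i) * Polynomial.X) fun i => by compute_degree
  rwa [MvPolynomial.aeval_map_algebraMap, mul_one] at this

theorem linePoly_map_ofReal (x v : Fin n → ℝ) :
    (linePoly p x v).map (algebraMap ℝ ℂ) =
      linePoly p (fun i => (x i : ℂ)) (fun i => (v i : ℂ)) := by
  have := MvPolynomial.comp_aeval_apply
    (fun i => Polynomial.C (x i) + Polynomial.C (v i) * Polynomial.X)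
    (Polynomial.mapAlgHom (Algebra.ofId ℝ ℂ)) p
  rw [linePoly, linePoly]
  refine this.trans ?_
  congr 2
  ext1 i
  simp

theorem coeff_linePoly (hp : p.IsHomogeneous d) (g a : Fin n → ℂ) :
    (linePoly p g a).coeff d = MvPolynomial.aeval a p := by
  have key : (linePoly p g a).reflect d = linePoly p a g := by
    apply Polynomial.eq_of_infinite_eval_eq
    refine (Set.infinite_of_finite_compl (s := {s : ℂ | s ≠ 0}) ?_).mono fun s hs => ?_
    · simp [Set.compl_ofPred]
    · have hs : s ≠ 0 := hs
      let _ : Invertible s⁻¹ := invertibleOfNonzero (inv_ne_zero hs)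
      have h := Polynomial.eval₂_reflect_mul_pow (RingHom.id ℂ) s⁻¹ d (linePoly p g a)
        (natDegree_linePoly_le hp g a)
      have h2 : g + s⁻¹ • a = s⁻¹ • (a + s • g) := by
        rw [smul_add, smul_smul, inv_mul_cancel₀ hs, one_smul, add_comm]
      simp only [Polynomial.eval₂_id, invOf_eq_inv, inv_inv, eval_linePoly, h2,
        MvPolynomial.aeval_smul_of_isHomogeneous hp] at h
      rw [Set.mem_ofPred_eq, eval_linePoly]
      have := pow_ne_zero d (inv_ne_zero hs)
      rw [mul_comm] at h
      exact mul_left_cancel₀ this h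
  have h0 := congrArg (Polynomial.coeff · 0) key
  simp only [Polynomial.coeff_reflect, Polynomial.revAt_zero] at h0
  rw [h0, Polynomial.coeff_zero_eq_eval_zero, eval_linePoly, zero_smul, add_zero]

/-- If `p(g + t a)` has no zeros in the open upper half plane then it is bounded below there in
terms of its leading coefficient. -/
theorem norm_aeval_mul_im_pow_le (hp : p.IsHomogeneous d) {g a : Fin n → ℂ}
    (h : ∀ t : ℂ, 0 < t.im → MvPolynomial.aeval (g + t • a) p ≠ 0) {t : ℂ} (ht : 0 < t.im) :
    ‖MvPolynomial.aeval a p‖ * t.im ^ d ≤ ‖MvPolynomial.aeval (g + t • a) p‖ := by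
  by_cases ha : MvPolynomial.aeval a p = 0
  · simp [ha]
  set Q := linePoly p g a with hQ
  have hdeg : Q.natDegree = d := Polynomial.natDegree_eq_of_le_of_coeff_ne_zero
    (natDegree_linePoly_le hp g a) (by rwa [coeff_linePoly hp])
  have hs : Q.Splits := IsAlgClosed.splits Q
  have hQ0 : Q ≠ 0 := by
    rintro h0
    have := coeff_linePoly hp g a
    rw [← hQ, h0] at this
    simp [← this] at ha
  rw [← eval_linePoly, ← hQ, hs.eval_eq_prod_roots, Polynomial.leadingCoeff, hdeg,
    coeff_linePoly hp, norm_mul]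
  refine mul_le_mul_of_nonneg_left ?_ (norm_nonneg _)
  have hroots : ∀ r ∈ Q.roots, t.im ≤ ‖t - r‖ := by
    intro r hr
    have hr0 : MvPolynomial.aeval (g + r • a) p = 0 := by
      rw [← eval_linePoly]
      exact (Polynomial.mem_roots hQ0).1 hr
    have : r.im ≤ 0 := not_lt.1 fun h' => h r h' hr0
    calc t.im ≤ (t - r).im := by simp; linarith
      _ ≤ _ := (le_abs_self _).trans (Complex.abs_im_le_norm _)
  have hcard : d = Q.roots.card := by rw [← hdeg, hs.natDegree_eq_card_roots]
  rw [hcard]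
  generalize Q.roots = s at hroots
  induction s using Multiset.induction_on with
  | empty => simp
  | cons r s ih =>
    rw [Multiset.map_cons, Multiset.prod_cons, Multiset.card_cons, norm_mul, pow_succ']
    exact mul_le_mul (hroots r (by simp)) (ih fun r' hr' => hroots r' (by simp [hr']))
      (by positivity) (norm_nonneg _)

/-- Zeros of `p(g + t a)` stay uniformly bounded for `g` in a bounded set. -/
theorem exists_norm_le_of_aeval_eq_zero (hp : p.IsHomogeneous d) {a : Fin n → ℂ}
    (ha : MvPolynomial.aeval a p ≠ 0) (B : ℝ) :
    ∃ M : ℝ, ∀ (g : Fin n → ℂ) (t : ℂ), ‖g‖ ≤ B →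
      MvPolynomial.aeval (g + t • a) p = 0 → ‖t‖ ≤ M := by
  have hnear : ∀ᶠ z in nhds a, MvPolynomial.aeval z p ≠ 0 :=
    p.continuous_aeval_complex.continuousAt.eventually_ne ha
  obtain ⟨δ, hδ, hball⟩ := Metric.eventually_nhds_iff.1 hnear
  refine ⟨(|B| + 1) / δ, fun g t hg h0 => not_lt.1 fun hlt => ?_⟩
  have ht : 0 < ‖t‖ := lt_trans (by positivity) hlt
  have ht0 : t ≠ 0 := norm_pos_iff.1 ht
  have h2 : g + t • a = t • (a + t⁻¹ • g) := by
    rw [smul_add, smul_smul, mul_inv_cancel₀ ht0, one_smul, add_comm]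
  rw [h2, MvPolynomial.aeval_smul_of_isHomogeneous hp] at h0
  refine hball ?_ ((mul_eq_zero.1 h0).resolve_left (pow_ne_zero d ht0))
  rw [dist_eq_norm, add_sub_cancel_left, norm_smul, norm_inv, inv_mul_lt_iff₀ ht]
  rw [div_lt_iff₀ hδ] at hlt
  linarith [le_abs_self B]

open Set in
/-- Along a homotopy for which no zero crosses the real axis, the upper half plane stays free of
zeros. -/
theorem aeval_ne_zero_of_homotopy (hp : p.IsHomogeneous d) {a : Fin n → ℂ}
    (ha : MvPolynomial.aeval a p ≠ 0) {γ : ℝ → Fin n → ℂ} (hγ : Continuous γ)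
    (h0 : ∀ t : ℂ, 0 < t.im → MvPolynomial.aeval (γ 0 + t • a) p ≠ 0)
    (hreal : ∀ τ ∈ Icc (0 : ℝ) 1, ∀ t : ℂ, t.im = 0 →
      MvPolynomial.aeval (γ τ + t • a) p ≠ 0) (t : ℂ) (ht : 0 ≤ t.im) :
    MvPolynomial.aeval (γ 1 + t • a) p ≠ 0 := by
  have hcont : Continuous fun q : ℝ × ℂ => MvPolynomial.aeval (γ q.1 + q.2 • a) p :=
    p.continuous_aeval_complex.comp (by fun_prop)
  let G : Set ℝ := {τ | ∀ t : ℂ, 0 ≤ t.im → MvPolynomial.aeval (γ τ + t • a) p ≠ 0}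
  suffices h : Icc (0 : ℝ) 1 ⊆ G from h (right_mem_Icc.2 zero_le_one) t ht
  refine IsClosed.Icc_subset_of_forall_mem_nhdsWithin ?_ ?_ ?_
  · have : G ∩ Icc 0 1 = (⋂ t : {t : ℂ // 0 < t.im},
        {τ | ‖MvPolynomial.aeval a p‖ * t.1.im ^ d ≤
          ‖MvPolynomial.aeval (γ τ + t.1 • a) p‖}) ∩ Icc 0 1 := by
      ext τ
      refine and_congr_left fun hτ => ?_
      simp only [mem_iInter, mem_ofPred_eq, Subtype.forall]
      constructor
      · intro h t ht
        exact norm_aeval_mul_im_pow_le hp (fun t ht => h t ht.le) ht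
      · intro h t ht
        rcases ht.eq_or_lt with ht | ht
        · exact hreal τ hτ t ht.symm
        · exact norm_pos_iff.1 (lt_of_lt_of_le
            (mul_pos (norm_pos_iff.2 ha) (pow_pos ht d)) (h t ht))
    rw [this]
    refine (isClosed_iInter fun t => ?_).inter isClosed_Icc
    exact isClosed_le continuous_const
      (hcont.comp (Continuous.prodMk continuous_id continuous_const)).norm
  · intro t ht
    rcases ht.eq_or_lt with ht | ht
    · exact hreal 0 (left_mem_Icc.2 zero_le_one) t ht.symm
    · exact h0 t ht
  · intro τ hτ
    obtain ⟨B, hB⟩ := (isCompact_Icc (a := (0 : ℝ)) (b := 1)).exists_bound_of_continuousOn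
      hγ.continuousOn
    obtain ⟨M, hM⟩ := exists_norm_le_of_aeval_eq_zero hp ha B
    let S : Set (ℝ × ℂ) := (Icc 0 1 ×ˢ Metric.closedBall 0 M) ∩
      {q | 0 ≤ q.2.im ∧ MvPolynomial.aeval (γ q.1 + q.2 • a) p = 0}
    have hS : IsCompact S := by
      refine (isCompact_Icc.prod (isCompact_closedBall _ _)).inter_right ?_
      exact (isClosed_le continuous_const (Complex.continuous_im.comp continuous_snd)).inter
        (isClosed_eq hcont continuous_const)
    have hcl : IsClosed (Prod.fst '' S) := (hS.image continuous_fst).isClosed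
    have hmem : τ ∈ (Prod.fst '' S)ᶜ := by
      rintro ⟨⟨τ', t⟩, hS', rfl⟩
      exact hτ.1 t hS'.2.1 hS'.2.2
    filter_upwards [nhdsWithin_le_nhds (hcl.isOpen_compl.mem_nhds hmem),
      Ioc_mem_nhdsGT hτ.2.2] with σ h1 h2 t ht hz
    have hσ : σ ∈ Icc (0 : ℝ) 1 := ⟨hτ.2.1.trans h2.1.le, h2.2⟩
    exact h1 ⟨(σ, t), ⟨⟨hσ, by simpa using hM _ t (hB σ hσ) hz⟩, ht, hz⟩, rfl⟩

end LinePoly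

/-- A real vector regarded as a complex vector. -/
noncomputable def toComplexVec {n : ℕ} (x : Fin n → ℝ) : Fin n → ℂ := fun i => (x i : ℂ)

/-- `p` has no zero of the form `x + t a` with `x` real and `t` in the upper half plane. -/
def IsHypDir {n : ℕ} (p : MvPolynomial (Fin n) ℝ) (a : Fin n → ℝ) : Prop :=
  MvPolynomial.eval a p ≠ 0 ∧ ∀ (x : Fin n → ℝ) (t : ℂ), 0 < t.im →
    MvPolynomial.aeval (toComplexVec x + t • toComplexVec a) p ≠ 0

/-- The points from which the ray in direction `a` avoids the zeros of `p`. -/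
def rayCone {n : ℕ} (p : MvPolynomial (Fin n) ℝ) (a : Fin n → ℝ) : Set (Fin n → ℝ) :=
  {y | ∀ s : ℝ, 0 ≤ s → MvPolynomial.eval (y + s • a) p ≠ 0}

section Garding

variable {n d : ℕ} {p : MvPolynomial (Fin n) ℝ}

theorem eval_smul_of_isHomogeneous (hp : p.IsHomogeneous d) (c : ℝ) (x : Fin n → ℝ) :
    MvPolynomial.eval (c • x) p = c ^ d * MvPolynomial.eval x p := by
  simpa [MvPolynomial.aeval_eq_eval] using MvPolynomial.aeval_smul_of_isHomogeneous hp c x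

theorem aeval_toComplexVec (x : Fin n → ℝ) :
    MvPolynomial.aeval (toComplexVec x) p = (MvPolynomial.eval x p : ℂ) :=
  p.aeval_ofReal x

theorem toComplexVec_add_smul (x y : Fin n → ℝ) (s : ℝ) :
    toComplexVec (x + s • y) = toComplexVec x + (s : ℂ) • toComplexVec y := by
  ext i
  simp [toComplexVec]

theorem aeval_toComplexVec_add_smul (x y : Fin n → ℝ) (s : ℝ) :
    MvPolynomial.aeval (toComplexVec x + (s : ℂ) • toComplexVec y) p =
      (MvPolynomial.eval (x + s • y) p : ℂ) := by
  rw [← toComplexVec_add_smul, aeval_toComplexVec]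

theorem aeval_smul_add_smul (hp : p.IsHomogeneous d) {c : ℂ} (hc : c ≠ 0) (t : ℂ)
    (x y : Fin n → ℂ) : MvPolynomial.aeval (c • x + t • y) p =
      c ^ d * MvPolynomial.aeval (x + (t / c) • y) p := by
  rw [← MvPolynomial.aeval_smul_of_isHomogeneous hp, smul_add, smul_smul, mul_div_cancel₀ _ hc]

theorem IsHypDir.aeval_ne_zero (hp : p.IsHomogeneous d) {a : Fin n → ℝ} (ha : IsHypDir p a)
    (x : Fin n → ℝ) {t : ℂ} (ht : t.im ≠ 0) :
    MvPolynomial.aeval (toComplexVec x + t • toComplexVec a) p ≠ 0 := by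
  rcases ht.lt_or_gt with ht | ht
  · have h := ha.2 (-x) (-t) (by simpa using ht)
    have h2 : toComplexVec (-x) + (-t) • toComplexVec a =
        (-1 : ℂ) • (toComplexVec x + t • toComplexVec a) := by
      ext i
      simp [toComplexVec]
      ring
    rw [h2, MvPolynomial.aeval_smul_of_isHomogeneous hp] at h
    exact right_ne_zero_of_mul h
  · exact ha.2 x t ht

/-- Off the closed negative real axis, `p(y + w a)` does not vanish for `y` in the cone of `a`. -/
theorem IsHypDir.aeval_ne_zero_of_mem (hp : p.IsHomogeneous d) {a y : Fin n → ℝ}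
    (ha : IsHypDir p a) (hy : y ∈ rayCone p a) {w : ℂ} (hw : w.im = 0 → 0 ≤ w.re) :
    MvPolynomial.aeval (toComplexVec y + w • toComplexVec a) p ≠ 0 := by
  by_cases h : w.im = 0
  · have : w = (w.re : ℂ) := by apply Complex.ext <;> simp [h]
    rw [this, aeval_toComplexVec_add_smul]
    exact_mod_cast hy _ (hw h)
  · exact ha.aeval_ne_zero hp y h

theorem IsHypDir.self_mem (hp : p.IsHomogeneous d) {a : Fin n → ℝ} (ha : IsHypDir p a) :
    a ∈ rayCone p a := by
  intro s hs
  have : a + s • a = (1 + s) • a := by rw [add_smul, one_smul]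
  rw [this, eval_smul_of_isHomogeneous hp]
  exact mul_ne_zero (pow_ne_zero _ (by positivity)) ha.1

theorem smul_add_smul_mem_rayCone (hp : p.IsHomogeneous d) {a y : Fin n → ℝ} {c s : ℝ}
    (hy : y ∈ rayCone p a) (hc : 0 < c) (hs : 0 ≤ s) :
    c • y + s • a ∈ rayCone p a := by
  intro r hr
  have : c • y + s • a + r • a = c • (y + ((s + r) / c) • a) := by
    rw [smul_add, smul_smul, mul_div_cancel₀ _ hc.ne', add_smul, add_assoc]
  rw [this, eval_smul_of_isHomogeneous hp]
  exact mul_ne_zero (pow_ne_zero _ hc.ne') (hy _ (by positivity))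

theorem IsHypDir.aeval_smul_I_add_ne_zero (hp : p.IsHomogeneous d) {a y : Fin n → ℝ}
    (ha : IsHypDir p a) (hy : y ∈ rayCone p a) {α : ℝ} (hα : 0 < α) {t : ℂ} (ht : 0 ≤ t.im) :
    MvPolynomial.aeval ((Complex.I * α) • toComplexVec a + t • toComplexVec y) p ≠ 0 := by
  have hα' : (α : ℂ) ≠ 0 := by exact_mod_cast hα.ne'
  by_cases h0 : t = 0
  · rw [h0, zero_smul, add_zero, MvPolynomial.aeval_smul_of_isHomogeneous hp,
      aeval_toComplexVec]
    exact mul_ne_zero (pow_ne_zero _ (mul_ne_zero Complex.I_ne_zero hα'))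
      (by exact_mod_cast ha.1)
  · rw [add_comm, aeval_smul_add_smul hp h0]
    refine mul_ne_zero (pow_ne_zero _ h0) (ha.aeval_ne_zero_of_mem hp hy fun _ => ?_)
    rw [Complex.div_re]
    simp only [Complex.mul_re, Complex.mul_im, Complex.I_re, Complex.I_im, Complex.ofReal_re,
      Complex.ofReal_im]
    have := Complex.normSq_nonneg t
    simp only [zero_mul, one_mul, mul_zero, sub_zero, zero_div, zero_add]
    positivity

/-- Every direction in the cone of a hyperbolic direction is itself hyperbolic. -/
theorem IsHypDir.of_mem (hp : p.IsHomogeneous d) {a y : Fin n → ℝ} (ha : IsHypDir p a)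
    (hy : y ∈ rayCone p a) : IsHypDir p y := by
  have hy0 : MvPolynomial.eval y p ≠ 0 := by simpa using hy 0 le_rfl
  have hy0' : MvPolynomial.aeval (toComplexVec y) p ≠ 0 := by
    rw [aeval_toComplexVec]; exact_mod_cast hy0
  refine ⟨hy0, fun x t ht => ?_⟩
  have hne : ∀ α : ℝ, 0 < α → ∀ t : ℂ, 0 ≤ t.im → MvPolynomial.aeval
      (((Complex.I * α) • toComplexVec a + toComplexVec x) + t • toComplexVec y) p ≠ 0 := by
    intro α hα t ht
    have := aeval_ne_zero_of_homotopy hp hy0'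
      (γ := fun τ : ℝ => (Complex.I * α) • toComplexVec a + (τ : ℂ) • toComplexVec x)
      (by fun_prop) ?_ ?_ t ht
    · simpa using this
    · intro t ht
      simpa using ha.aeval_smul_I_add_ne_zero hp hy hα ht.le
    · intro τ _ t ht
      have h1 : t = (t.re : ℂ) := by apply Complex.ext <;> simp [ht]
      have h2 : (Complex.I * α) • toComplexVec a + (τ : ℂ) • toComplexVec x +
          t • toComplexVec y =
            toComplexVec (τ • x + t.re • y) + (Complex.I * α) • toComplexVec a := by
        rw [h1]
        ext i
        simp [toComplexVec]
        ring
      rw [h2]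
      exact ha.aeval_ne_zero hp _ (by simpa using hα.ne')
  have hbound : ∀ α : ℝ, 0 < α → ‖MvPolynomial.aeval (toComplexVec y) p‖ * t.im ^ d ≤
      ‖MvPolynomial.aeval
        (((Complex.I * α) • toComplexVec a + toComplexVec x) + t • toComplexVec y) p‖ :=
    fun α hα => norm_aeval_mul_im_pow_le hp (fun t ht => hne α hα t ht.le) ht
  have hcont : Continuous fun α : ℝ => ‖MvPolynomial.aeval
      (((Complex.I * α) • toComplexVec a + toComplexVec x) + t • toComplexVec y) p‖ :=
    (p.continuous_aeval_complex.comp (by fun_prop)).norm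
  have hlim := ge_of_tendsto (hcont.continuousWithinAt (s := Set.Ioi 0) (x := 0)).tendsto
    (Filter.eventually_of_mem self_mem_nhdsWithin hbound)
  simp only [Complex.ofReal_zero, mul_zero, zero_smul, zero_add] at hlim
  exact norm_pos_iff.1 (lt_of_lt_of_le
    (mul_pos (norm_pos_iff.2 hy0') (pow_pos ht d)) hlim)

theorem im_div_I (t : ℂ) : (t / Complex.I).im = -t.re := by simp [Complex.div_I]

theorem re_div_I (t : ℂ) : (t / Complex.I).re = t.im := by simp [Complex.div_I]

/-- The cone of `a` is contained in the cone of each of its points. -/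
theorem IsHypDir.rayCone_subset (hp : p.IsHomogeneous d) {a y : Fin n → ℝ}
    (ha : IsHypDir p a) (hy : y ∈ rayCone p a) : rayCone p a ⊆ rayCone p y := by
  intro x hx s hs
  have hyd := ha.of_mem hp hy
  have hy0' : MvPolynomial.aeval (toComplexVec y) p ≠ 0 := by
    rw [aeval_toComplexVec]; exact_mod_cast hyd.1
  have := aeval_ne_zero_of_homotopy hp hy0'
    (γ := fun τ : ℝ => Complex.I • (((1 - τ : ℝ) : ℂ) • toComplexVec a +
      (τ : ℂ) • toComplexVec x)) (by fun_prop) ?_ ?_ (Complex.I * s) (by simpa using hs)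
  · have hI : Complex.I * s / Complex.I = s := mul_div_cancel_left₀ _ Complex.I_ne_zero
    rw [aeval_smul_add_smul hp Complex.I_ne_zero, hI] at this
    simp only [sub_self, Complex.ofReal_zero, zero_smul, Complex.ofReal_one, one_smul,
      zero_add] at this
    rw [aeval_toComplexVec_add_smul] at this
    exact_mod_cast right_ne_zero_of_mul this
  · intro t ht
    simpa using ha.aeval_smul_I_add_ne_zero hp hy one_pos ht.le
  · intro τ hτ t ht
    rw [aeval_smul_add_smul hp Complex.I_ne_zero]
    refine mul_ne_zero (pow_ne_zero _ Complex.I_ne_zero) ?_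
    have hz : (((1 - τ : ℝ) : ℂ) • toComplexVec a + (τ : ℂ) • toComplexVec x) =
        toComplexVec (τ • x + (1 - τ) • a) := by
      ext i
      simp [toComplexVec]
      ring
    rw [hz]
    have hmem : τ • x + (1 - τ) • a ∈ rayCone p a := by
      rcases hτ.1.eq_or_lt with h | h
      · simpa [← h] using ha.self_mem hp
      · exact smul_add_smul_mem_rayCone hp hx h (by linarith [hτ.2])
    by_cases h : t.re = 0
    · have ht0 : t = 0 := Complex.ext h ht
      rw [ht0, zero_div, zero_smul, add_zero, aeval_toComplexVec]
      have := hmem 0 le_rfl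
      rw [zero_smul, add_zero] at this
      exact_mod_cast this
    · exact hyd.aeval_ne_zero hp _ (by rwa [im_div_I, neg_ne_zero])

theorem IsHypDir.rayCone_eq (hp : p.IsHomogeneous d) {a y : Fin n → ℝ}
    (ha : IsHypDir p a) (hy : y ∈ rayCone p a) : rayCone p y = rayCone p a :=
  ((ha.of_mem hp hy).rayCone_subset hp (ha.rayCone_subset hp hy (ha.self_mem hp))).antisymm
    (ha.rayCone_subset hp hy)

theorem IsHypDir.convex_rayCone (hp : p.IsHomogeneous d) {a : Fin n → ℝ}
    (ha : IsHypDir p a) : Convex ℝ (rayCone p a) := by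
  refine convex_iff_forall_pos.2 fun x hx y hy b c hb hc _ => ?_
  rw [← ha.rayCone_eq hp hy] at hx ⊢
  exact smul_add_smul_mem_rayCone hp hx hb hc.le

theorem IsHypDir.abs_eval_mul_pow_le (hp : p.IsHomogeneous d) {a y : Fin n → ℝ}
    (ha : IsHypDir p a) (hy : y ∈ rayCone p a) {s : ℝ} (hs : 0 < s) :
    |MvPolynomial.eval a p| * s ^ d ≤ |MvPolynomial.eval (y + s • a) p| := by
  have h := norm_aeval_mul_im_pow_le hp (g := Complex.I • toComplexVec y)
    (a := toComplexVec a) (t := Complex.I * s) (fun t ht => ?_) (by simpa using hs)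
  · have hI : Complex.I * s / Complex.I = s := mul_div_cancel_left₀ _ Complex.I_ne_zero
    rw [aeval_smul_add_smul hp Complex.I_ne_zero, hI, aeval_toComplexVec_add_smul,
      aeval_toComplexVec] at h
    simpa using h
  · rw [aeval_smul_add_smul hp Complex.I_ne_zero]
    exact mul_ne_zero (pow_ne_zero _ Complex.I_ne_zero)
      (ha.aeval_ne_zero_of_mem hp hy fun _ => by rw [re_div_I]; exact ht.le)

theorem hypCharPoly_eq_linePoly (e x : Fin n → ℝ) : hypCharPoly p e x = linePoly p (-x) e := by
  rw [hypCharPoly, linePoly]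
  congr 2
  ext1 i
  rw [Pi.neg_apply, map_neg]
  ring

theorem IsHyperbolicPoly.isHypDir (hd : 1 ≤ d) {e : Fin n → ℝ} (h : IsHyperbolicPoly p e d) :
    IsHypDir p e := by
  refine ⟨h.2.1, fun x t ht h0 => ?_⟩
  have hcard := h.2.2 (-x)
  rw [hypCharPoly_eq_linePoly, neg_neg] at hcard
  have hne : linePoly p x e ≠ 0 := by
    intro h0
    rw [h0, Polynomial.roots_zero, Multiset.card_zero] at hcard
    omega
  have hs : (linePoly p x e).Splits := Polynomial.splits_iff_card_roots.2
    (le_antisymm (Polynomial.card_roots' _) (hcard ▸ natDegree_linePoly_le h.1 x e))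
  have hroot : ((linePoly p x e).map (algebraMap ℝ ℂ)).IsRoot t := by
    rw [linePoly_map_ofReal, Polynomial.IsRoot, eval_linePoly]
    exact h0
  obtain ⟨r, rfl⟩ := hs.mem_range_of_isRoot hne hroot
  simp at ht

theorem IsHyperbolicPoly.mem_roots_hypCharPoly (hd : 1 ≤ d) {e : Fin n → ℝ}
    (h : IsHyperbolicPoly p e d) (x : Fin n → ℝ) (r : ℝ) :
    r ∈ (hypCharPoly p e x).roots ↔ MvPolynomial.eval (x + (-r) • e) p = 0 := by
  have hne : hypCharPoly p e x ≠ 0 := by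
    intro h0
    have := h.2.2 x
    rw [h0, Polynomial.roots_zero, Multiset.card_zero] at this
    omega
  rw [Polynomial.mem_roots hne, hypCharPoly_eq_linePoly, Polynomial.IsRoot, eval_linePoly,
    MvPolynomial.aeval_eq_eval]
  have : x + (-r) • e = (-1 : ℝ) • (-x + r • e) := by
    ext i
    simp [add_comm]
  rw [this, eval_smul_of_isHomogeneous h.1]
  simp

theorem IsHyperbolicPoly.hypConeOpen_eq (hd : 1 ≤ d) {e : Fin n → ℝ}
    (h : IsHyperbolicPoly p e d) : hypConeOpen p e = rayCone p e := by
  ext x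
  simp only [hypConeOpen, rayCone, Set.mem_ofPred_eq, h.mem_roots_hypCharPoly hd]
  constructor
  · intro hx s hs h0
    have := hx (-s) (by rwa [neg_neg])
    linarith
  · intro hx r h0
    by_contra hr
    exact hx (-r) (by linarith) h0

/-- If the closed cone is regular, `p` is not constant along any nonzero direction. -/
theorem IsRegularCone.eq_zero_of_forall_eval_eq (hd : 1 ≤ d) {e a v : Fin n → ℝ}
    (h : IsHyperbolicPoly p e d) (hreg : IsRegularCone p e) (ha : a ∈ hypConeOpen p e)
    (hv : ∀ s : ℝ, MvPolynomial.eval (a + s • v) p = MvPolynomial.eval a p) : v = 0 := by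
  have he := h.isHypDir hd
  rw [h.hypConeOpen_eq hd] at ha
  have had := he.of_mem h.1 ha
  rw [← Submodule.span_singleton_eq_bot (R := ℝ)]
  refine hreg _ fun w hw r hr => ?_
  obtain ⟨c, rfl⟩ := Submodule.mem_span_singleton.1 hw
  rw [h.mem_roots_hypCharPoly hd] at hr
  by_contra hr0
  have hmem : ∀ ε : ℝ, 0 < ε → c • v + ε • a ∈ rayCone p e := by
    intro ε hε
    rw [← he.rayCone_eq h.1 ha]
    intro s hs
    have hpos : ε + s ≠ 0 := by positivity
    have : c • v + ε • a + s • a = (ε + s) • (a + (c / (ε + s)) • v) := by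
      rw [smul_add, smul_smul, mul_div_cancel₀ _ hpos, add_assoc, ← add_smul, add_comm]
    rw [this, eval_smul_of_isHomogeneous h.1, hv]
    exact mul_ne_zero (pow_ne_zero _ hpos) had.1
  have hr1 : 0 < -r := by linarith
  have hcont : Continuous fun ε : ℝ =>
      |MvPolynomial.eval (c • v + ε • a + (-r) • e) p| :=
    ((MvPolynomial.continuous_eval p).comp (by fun_prop)).abs
  have hlim := ge_of_tendsto (hcont.continuousWithinAt (s := Set.Ioi 0) (x := 0)).tendsto
    (Filter.eventually_of_mem self_mem_nhdsWithin fun ε hε =>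
      he.abs_eval_mul_pow_le h.1 (hmem ε hε) hr1)
  simp only [zero_smul, add_zero] at hlim
  rw [hr, abs_zero] at hlim
  exact absurd hlim (not_le.2 (mul_pos (abs_pos.2 he.1) (pow_pos hr1 d)))

end Garding

namespace Polynomial

/-- The strict Laguerre inequality for a nonconstant real-rooted polynomial. -/
theorem Splits.laguerre_pos {R : ℝ[X]} (hR : R.Splits) (hdeg : R.natDegree ≠ 0) {x : ℝ}
    (hx : R.eval x ≠ 0) :
    0 < R.derivative.eval x ^ 2 - R.eval x * R.derivative.derivative.eval x := by
  have key : ∀ s : Multiset ℝ, (∀ r ∈ s, x - r ≠ 0) →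
      let P : ℝ[X] := (s.map fun r => X - C r).prod
      0 ≤ P.derivative.eval x ^ 2 - P.eval x * P.derivative.derivative.eval x ∧
      (s ≠ 0 → 0 < P.derivative.eval x ^ 2 - P.eval x * P.derivative.derivative.eval x) := by
    intro s
    induction s using Multiset.induction_on with
    | empty => simp
    | cons r s ih =>
      intro hs
      have ihs := (ih fun r' hr' => hs r' (by simp [hr'])).1
      have hr := hs r (by simp)
      have hP : ((s.map fun r => X - C r).prod).eval x ≠ 0 := by
        rw [eval_multiset_prod, Multiset.map_map]
        refine Multiset.prod_ne_zero fun h => ?_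
        obtain ⟨r', hr', h0⟩ := Multiset.mem_map.1 h
        exact hs r' (by simp [hr']) (by simpa using h0)
      simp only [Multiset.map_cons, Multiset.prod_cons] at ihs ⊢
      generalize (s.map fun r => X - C r).prod = P at *
      suffices h : 0 < ((X - C r) * P).derivative.eval x ^ 2 -
          ((X - C r) * P).eval x * ((X - C r) * P).derivative.derivative.eval x from
        ⟨h.le, fun _ => h⟩
      have : ((X - C r) * P).derivative.eval x ^ 2 -
          ((X - C r) * P).eval x * ((X - C r) * P).derivative.derivative.eval x =
          P.eval x ^ 2 + (x - r) ^ 2 *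
            (P.derivative.eval x ^ 2 - P.eval x * P.derivative.derivative.eval x) := by
        simp
        ring
      rw [this]
      positivity
  have hR0 : R ≠ 0 := by rintro rfl; simp at hdeg
  have h := (key R.roots fun r hr h => hx (by
    rw [sub_eq_zero.1 h]; exact (mem_roots hR0).1 hr)).2 (hR.roots_ne_zero hdeg)
  have hlc : R.leadingCoeff ≠ 0 := leadingCoeff_ne_zero.2 hR0
  have hprod := hR.eq_prod_roots
  generalize (R.roots.map fun r => X - C r).prod = P at *
  generalize R.leadingCoeff = c at *
  subst hprod
  have : (C c * P).derivative.eval x ^ 2 -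
      (C c * P).eval x * (C c * P).derivative.derivative.eval x =
      c ^ 2 * (P.derivative.eval x ^ 2 - P.eval x * P.derivative.derivative.eval x) := by
    simp
    ring
  rw [this]
  positivity

open Set in
/-- The logarithm of a nonconstant real-rooted polynomial without zeros on `[0, 1]` is strictly
concave there. -/
theorem Splits.log_eval_lt {R : ℝ[X]} (hR : R.Splits) (hdeg : R.natDegree ≠ 0)
    (hne : ∀ t ∈ Icc (0 : ℝ) 1, R.eval t ≠ 0) {a b : ℝ} (ha : 0 < a) (hb : 0 < b)
    (hab : a + b = 1) :
    a * Real.log (R.eval 0) + b * Real.log (R.eval 1) < Real.log (R.eval b) := by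
  have hR0 : R ≠ 0 := by rintro rfl; simp at hdeg
  have hroots : ∀ r ∈ R.roots, r ∉ Icc (0 : ℝ) 1 := fun r hr hr' =>
    hne r hr' ((mem_roots hR0).1 hr)
  have hlog : ∀ t ∈ Icc (0 : ℝ) 1, Real.log (R.eval t) =
      Real.log R.leadingCoeff + (R.roots.map fun r => Real.log (t - r)).sum := by
    intro t ht
    rw [hR.eval_eq_prod_roots, Real.log_mul (leadingCoeff_ne_zero.2 hR0)]
    · congr 1
      generalize R.roots = s at hroots
      induction s using Multiset.induction_on with
      | empty => simp
      | cons r s ih =>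
        rw [Multiset.map_cons, Multiset.prod_cons, Multiset.map_cons, Multiset.sum_cons,
          Real.log_mul, ih fun r' hr' => hroots r' (by simp [hr'])]
        · rintro h
          exact hroots r (by simp) (by rwa [← sub_eq_zero.1 h])
        · refine Multiset.prod_ne_zero fun h => ?_
          obtain ⟨r', hr', h0⟩ := Multiset.mem_map.1 h
          exact hroots r' (by simp [hr']) (by rwa [← sub_eq_zero.1 h0])
    · intro h
      apply hne t ht
      rw [hR.eval_eq_prod_roots, h, mul_zero]
  rw [hlog 0 (by simp), hlog 1 (by simp), hlog b ⟨hb.le, by linarith⟩]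
  have hsum := Multiset.sum_lt_sum_of_nonempty (s := R.roots)
    (f := fun r => a * Real.log (0 - r) + b * Real.log (1 - r))
    (g := fun r => Real.log (b - r)) (hR.roots_ne_zero hdeg) fun r hr => ?_
  · rw [Multiset.sum_map_add, Multiset.sum_map_mul_left, Multiset.sum_map_mul_left] at hsum
    have : Real.log R.leadingCoeff =
        a * Real.log R.leadingCoeff + b * Real.log R.leadingCoeff := by
      rw [← add_mul, hab, one_mul]
    linarith
  · have hr' := hroots r hr
    rcases lt_or_ge r 0 with h0 | h0
    · have := strictConcaveOn_log_Ioi.2 (x := 0 - r) (y := 1 - r)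
        (by simpa using h0) (mem_Ioi.2 (by linarith)) (by intro h; linarith) ha hb hab
      have he : a • (0 - r) + b • (1 - r) = b - r := by
        simp only [smul_eq_mul]; linear_combination (-r) * hab
      rwa [he] at this
    · have h1 : 1 < r := not_le.1 fun h1 => hr' ⟨h0, h1⟩
      have := strictConcaveOn_log_Ioi.2 (x := r - 0) (y := r - 1)
        (mem_Ioi.2 (by linarith)) (mem_Ioi.2 (by linarith)) (by intro h; linarith) ha hb hab
      have he : a • (r - 0) + b • (r - 1) = r - b := by
        simp only [smul_eq_mul]; linear_combination r * hab
      rwa [he, ← Real.log_neg_eq_log (r - 0), ← Real.log_neg_eq_log (r - 1),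
        ← Real.log_neg_eq_log (r - b), neg_sub, neg_sub, neg_sub] at this

end Polynomial

section Hessian

variable {n d : ℕ} {p : MvPolynomial (Fin n) ℝ}

theorem IsHypDir.splits_linePoly (hp : p.IsHomogeneous d) {a : Fin n → ℝ} (ha : IsHypDir p a)
    (v : Fin n → ℝ) : (linePoly p a v).Splits := by
  refine Polynomial.Splits.of_splits_map (algebraMap ℝ ℂ) (IsAlgClosed.splits _) fun s hs => ?_
  have hroot := Polynomial.isRoot_of_mem_roots hs
  rw [linePoly_map_ofReal, Polynomial.IsRoot, eval_linePoly] at hroot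
  by_cases him : s.im = 0
  · exact ⟨s.re, Complex.ext (by simp) (by simp [him])⟩
  · have hs0 : s ≠ 0 := by rintro rfl; simp at him
    rw [add_comm] at hroot
    have h := aeval_smul_add_smul hp hs0 1 (toComplexVec v) (toComplexVec a)
    rw [one_smul] at h
    refine absurd (h.symm.trans hroot) (mul_ne_zero (pow_ne_zero _ hs0)
      (ha.aeval_ne_zero hp v ?_))
    simpa using ⟨him, hs0⟩

theorem derivative_linePoly (p : MvPolynomial (Fin n) ℝ) (g a : Fin n → ℝ) :
    (linePoly p g a).derivative =
      ∑ i, Polynomial.C (a i) * linePoly (MvPolynomial.pderiv i p) g a := by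
  induction p using MvPolynomial.induction_on with
  | C c => simp [linePoly]
  | add p q hp hq =>
    simp only [linePoly, map_add, mul_add, Finset.sum_add_distrib] at *
    rw [hp, hq]
  | mul_X p j hp =>
    have hX : Polynomial.derivative (linePoly (MvPolynomial.X j) g a) = Polynomial.C (a j) := by
      simp [linePoly]
    have hsum : ∑ i, Polynomial.C (a i) * (linePoly p g a *
        linePoly (MvPolynomial.pderiv i (MvPolynomial.X j)) g a) =
          linePoly p g a * Polynomial.C (a j) := by
      rw [Finset.sum_eq_single j]
      · rw [MvPolynomial.pderiv_X_self, mul_comm]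
        simp [linePoly]
      · intro i _ hij
        simp [linePoly, MvPolynomial.pderiv_X_of_ne hij.symm]
      · simp
    simp only [linePoly] at hp hX hsum
    simp only [linePoly, map_mul, Polynomial.derivative_mul, hp, hX, MvPolynomial.pderiv_mul,
      map_add, mul_add, Finset.sum_add_distrib, hsum, Finset.sum_mul, mul_assoc]

theorem pderiv_comm (i j : Fin n) (p : MvPolynomial (Fin n) ℝ) :
    MvPolynomial.pderiv i (MvPolynomial.pderiv j p) =
      MvPolynomial.pderiv j (MvPolynomial.pderiv i p) := by
  have h : ⁅MvPolynomial.pderiv (R := ℝ) i, MvPolynomial.pderiv (R := ℝ) j⁆ = 0 := by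
    apply MvPolynomial.derivation_ext
    intro k
    simp [Derivation.commutator_apply, MvPolynomial.pderiv_X, Pi.single_apply, apply_ite]
  have h2 := congrArg (fun D => D p) h
  simpa [Derivation.commutator_apply, sub_eq_zero] using h2

theorem isHermitian_hessNegLog (p : MvPolynomial (Fin n) ℝ) (a : Fin n → ℝ) :
    (hessNegLog p a).IsHermitian := by
  ext i j
  simp only [hessNegLog, Matrix.conjTranspose_apply, Matrix.of_apply, star_trivial]
  rw [pderiv_comm j i, mul_comm]

theorem dotProduct_hessNegLog_mulVec {a : Fin n → ℝ} (ha : MvPolynomial.eval a p ≠ 0)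
    (v : Fin n → ℝ) :
    v ⬝ᵥ (hessNegLog p a).mulVec v =
      ((linePoly p a v).derivative.eval 0 ^ 2 -
        (linePoly p a v).eval 0 * (linePoly p a v).derivative.derivative.eval 0) /
          MvPolynomial.eval a p ^ 2 := by
  have hev : ∀ q : MvPolynomial (Fin n) ℝ, (linePoly q a v).eval 0 = MvPolynomial.eval a q :=
    fun q => by rw [eval_linePoly, zero_smul, add_zero, MvPolynomial.aeval_eq_eval]
  simp only [derivative_linePoly, Polynomial.derivative_sum, Polynomial.derivative_C_mul,
    Polynomial.eval_finsetSum, Polynomial.eval_mul, Polynomial.eval_C, hev]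
  simp only [dotProduct, Matrix.mulVec, hessNegLog, Matrix.of_apply, Finset.mul_sum, sq,
    Finset.sum_mul, ← Finset.sum_sub_distrib, Finset.sum_div]
  refine Finset.sum_congr rfl fun i _ => Finset.sum_congr rfl fun j _ => ?_
  rw [pderiv_comm i j]
  field_simp

end Hessian

/-- Proposition 8.6 in RS14.
If the hyperbolicity cone is regular, then for every `e' ∈ Λ₊₊` the Hessian of `-ln p` at `e'`
is positive definite; in particular `-ln p` is strictly convex on `Λ₊₊`. -/
theorem stmt4 {n d : ℕ} (hd : 1 ≤ d) (p : MvPolynomial (Fin n) ℝ) (e : Fin n → ℝ)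
    (hp : IsHyperbolicPoly p e d) (hpe : 0 < MvPolynomial.eval e p)
    (hreg : IsRegularCone p e) :
    (∀ e' ∈ hypConeOpen p e, (hessNegLog p e').PosDef) ∧
    StrictConvexOn ℝ (hypConeOpen p e)
      (fun x : Fin n → ℝ => -Real.log (MvPolynomial.eval x p)) := by
  have hop := hp.hypConeOpen_eq hd
  have he := hp.isHypDir hd
  have hdir : ∀ a ∈ hypConeOpen p e, IsHypDir p a := fun a ha =>
    he.of_mem hp.1 (hop ▸ ha)
  have hdeg : ∀ a ∈ hypConeOpen p e, ∀ v : Fin n → ℝ, v ≠ 0 →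
      (linePoly p a v).natDegree ≠ 0 := by
    intro a ha v hv h0
    refine hv (hreg.eq_zero_of_forall_eval_eq hd hp ha fun s => ?_)
    have hc := Polynomial.eq_C_of_natDegree_eq_zero h0
    have h1 := eval_linePoly (p := p) a v s
    have h2 := eval_linePoly (p := p) a v 0
    rw [hc, Polynomial.eval_C, MvPolynomial.aeval_eq_eval] at h1 h2
    rw [zero_smul, add_zero] at h2
    rw [← h1, h2]
  refine ⟨fun a ha => ?_, ?_, ?_⟩
  · refine Matrix.PosDef.of_dotProduct_mulVec_pos (isHermitian_hessNegLog p a) fun v hv => ?_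
    have ha0 := (hdir a ha).1
    have hpos := (hdir a ha).splits_linePoly hp.1 v |>.laguerre_pos (hdeg a ha v hv)
      (x := 0) (by rwa [eval_linePoly, zero_smul, add_zero, MvPolynomial.aeval_eq_eval])
    rw [star_trivial, dotProduct_hessNegLog_mulVec ha0]
    exact div_pos hpos (by positivity)
  · rw [hop]
    exact he.convex_rayCone hp.1
  · intro x hx y hy hxy a b ha hb hab
    have hconv : Convex ℝ (hypConeOpen p e) := hop ▸ he.convex_rayCone hp.1
    have heval : ∀ t : ℝ, MvPolynomial.eval (x + t • (y - x)) p =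
        (linePoly p x (y - x)).eval t := fun t => by
      rw [eval_linePoly, MvPolynomial.aeval_eq_eval]
    have hlog := ((hdir x hx).splits_linePoly hp.1 (y - x)).log_eval_lt
      (hdeg x hx _ (sub_ne_zero.2 hxy.symm)) (fun t ht => ?_) ha hb hab
    · rw [← heval, ← heval, ← heval, zero_smul, add_zero, one_smul, add_sub_cancel] at hlog
      have hpt : x + b • (y - x) = a • x + b • y := by
        rw [← eq_sub_iff_add_eq] at hab
        rw [hab, sub_smul, smul_sub, one_smul]
        abel
      rw [hpt] at hlog
      simp only [smul_eq_mul]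
      linarith
    · rw [← heval]
      exact (hdir _ (hconv.add_smul_sub_mem hx hy ht)).1
end

section
/- Let p be a real polynomial in n variables, homogeneous of degree d, hyperbolic in direction e ∈ ℝⁿ with p(e) > 0. Then for every e' ∈ Λ₊₊: (i) e'ᵀH(e')e' = d, i.e. ‖e'‖_{e'} = √d; and (ii) the open local unit ball {x ∈ ℝⁿ : (x − e')ᵀH(e')(x − e') < 1} is contained in Λ₊₊. -/
open scoped BigOperators

open Polynomial in
lemma Polynomial.coeff_prod_sum_of_natDegree_le {ι R : Type*} [CommSemiring R] (s : Finset ι)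
    (f : ι → R[X]) (k : ι → ℕ) (h : ∀ i ∈ s, (f i).natDegree ≤ k i) :
    (∏ i ∈ s, f i).coeff (∑ i ∈ s, k i) = ∏ i ∈ s, (f i).coeff (k i) := by
  classical
  induction s using Finset.induction_on with
  | empty => simp
  | insert a s ha ih =>
    rw [Finset.prod_insert ha, Finset.prod_insert ha, Finset.sum_insert ha,
      coeff_mul_add_eq_of_natDegree_le (h a (Finset.mem_insert_self a s)),
      ih fun i hi => h i (Finset.mem_insert_of_mem hi)]
    exact (natDegree_prod_le _ _).trans
      (Finset.sum_le_sum fun i hi => h i (Finset.mem_insert_of_mem hi))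

open Polynomial in
lemma Polynomial.natDegree_C_mul_X_add_C_pow_le {R : Type*} [CommRing R] (a b : R) (k : ℕ) :
    ((C a * X + C b) ^ k).natDegree ≤ k := by
  exact (natDegree_pow_le_of_le k (by compute_degree : (C a * X + C b).natDegree ≤ 1)).trans_eq
    (mul_one k)

section LineSubst

open Polynomial

variable {n d : ℕ} {p : MvPolynomial (Fin n) ℝ} {R : Type*} [CommRing R] [Algebra ℝ R]

/-- The univariate polynomial `t ↦ p(t • u + y)`. -/
noncomputable def lineSubst (p : MvPolynomial (Fin n) ℝ) (u y : Fin n → R) : R[X] :=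
  MvPolynomial.aeval (fun i => C (u i) * X + C (y i)) p

lemma eval_lineSubst (p : MvPolynomial (Fin n) ℝ) (u y : Fin n → R) (t : R) :
    (lineSubst p u y).eval t = MvPolynomial.aeval (t • u + y) p := by
  induction p using MvPolynomial.induction_on with
  | C a => simp [lineSubst, Polynomial.algebraMap_apply]
  | add p q hp hq => simp_all [lineSubst]
  | mul_X p i hp =>
    rw [lineSubst] at hp
    simp [lineSubst, hp, mul_comm (u i) t]

lemma MvPolynomial.IsHomogeneous.eq_sum_of_mem_support (hp : p.IsHomogeneous d) {m : Fin n →₀ ℕ}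
    (hm : m ∈ p.support) : d = ∑ i, m i := by
  rw [← hp (MvPolynomial.mem_support_iff.mp hm), Finsupp.weight_apply, Finsupp.sum_fintype] <;>
    simp

lemma natDegree_lineSubst_le (hp : p.IsHomogeneous d) (u y : Fin n → R) :
    (lineSubst p u y).natDegree ≤ d := by
  rw [lineSubst, MvPolynomial.aeval_def, MvPolynomial.eval₂_eq']
  refine natDegree_sum_le_of_forall_le _ _ fun m hm => ?_
  rw [Polynomial.algebraMap_apply, hp.eq_sum_of_mem_support hm]
  exact (natDegree_C_mul_le _ _).trans <| (natDegree_prod_le _ _).trans <|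
    Finset.sum_le_sum fun i _ => natDegree_C_mul_X_add_C_pow_le _ _ _

lemma coeff_lineSubst (hp : p.IsHomogeneous d) (u y : Fin n → R) :
    (lineSubst p u y).coeff d = MvPolynomial.aeval u p := by
  rw [lineSubst, MvPolynomial.aeval_def, MvPolynomial.eval₂_eq', MvPolynomial.aeval_def,
    MvPolynomial.eval₂_eq', finsetSum_coeff]
  refine Finset.sum_congr rfl fun m hm => ?_
  rw [Polynomial.algebraMap_apply, coeff_C_mul, hp.eq_sum_of_mem_support hm,
    coeff_prod_sum_of_natDegree_le _ _ _ fun i _ => natDegree_C_mul_X_add_C_pow_le _ _ _]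
  congr 1
  refine Finset.prod_congr rfl fun i _ => ?_
  have := coeff_pow_of_natDegree_le (m := m i)
    (by compute_degree : (C (u i) * X + C (y i)).natDegree ≤ 1)
  simpa using this

lemma lineSubst_ne_zero (hp : p.IsHomogeneous d) {u : Fin n → R}
    (hu : MvPolynomial.aeval u p ≠ 0) (y : Fin n → R) : lineSubst p u y ≠ 0 := by
  intro h
  rw [← coeff_lineSubst hp u y, h, coeff_zero] at hu
  exact hu rfl

lemma derivative_lineSubst (p : MvPolynomial (Fin n) ℝ) (u y : Fin n → R) :
    derivative (lineSubst p u y) = ∑ i, C (u i) * lineSubst (MvPolynomial.pderiv i p) u y := by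
  induction p using MvPolynomial.induction_on with
  | C a => simp [lineSubst, Polynomial.algebraMap_apply]
  | add p q hp hq => simp_all [lineSubst, mul_add, Finset.sum_add_distrib]
  | mul_X p j hp =>
    have hmul (q : MvPolynomial (Fin n) ℝ) : lineSubst (q * MvPolynomial.X j) u y =
        lineSubst q u y * (C (u j) * X + C (y j)) := by
      simp [lineSubst]
    have hpd (i : Fin n) : lineSubst (MvPolynomial.pderiv i (p * MvPolynomial.X j)) u y =
        (if j = i then lineSubst p u y else 0) +
          (C (u j) * X + C (y j)) * lineSubst (MvPolynomial.pderiv i p) u y := by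
      split_ifs with h <;> simp [lineSubst, Derivation.leibniz, MvPolynomial.pderiv_X, h]
    have hlin : derivative (C (u j) * X + C (y j)) = C (u j) := by simp
    generalize C (u j) * X + C (y j) = L at hmul hpd hlin
    simp only [hmul, hpd, derivative_mul, hp, hlin, mul_add, Finset.sum_add_distrib, mul_ite,
      mul_zero, Finset.sum_ite_eq, Finset.mem_univ, if_true, mul_left_comm _ L, ← Finset.mul_sum]
    ring

lemma lineSubst_map (p : MvPolynomial (Fin n) ℝ) (u y : Fin n → ℝ) :
    (lineSubst p u y).map (algebraMap ℝ ℂ) =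
      lineSubst p (fun i => (u i : ℂ)) (fun i => (y i : ℂ)) := by
  induction p using MvPolynomial.induction_on with
  | C a => simp [lineSubst, Polynomial.algebraMap_apply]
  | add p q hp hq => simp_all [lineSubst]
  | mul_X p i hp => simp_all [lineSubst]

lemma aeval_smul_of_isHomogeneous (hp : p.IsHomogeneous d) (c : R) (z : Fin n → R) :
    MvPolynomial.aeval (c • z) p = c ^ d * MvPolynomial.aeval z p := by
  rw [MvPolynomial.aeval_def, MvPolynomial.eval₂_eq', MvPolynomial.aeval_def,
    MvPolynomial.eval₂_eq', Finset.mul_sum]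
  refine Finset.sum_congr rfl fun m hm => ?_
  simp only [Pi.smul_apply, smul_eq_mul, mul_pow, Finset.prod_mul_distrib,
    Finset.prod_pow_eq_pow_sum, ← hp.eq_sum_of_mem_support hm]
  ring

lemma localIP_eq_lineSubst (p : MvPolynomial (Fin n) ℝ) (y v : Fin n → ℝ) :
    localIP p y v v = ((lineSubst p v y).derivative.eval 0 ^ 2 -
      (lineSubst p v y).eval 0 * (derivative (lineSubst p v y).derivative).eval 0) /
        (lineSubst p v y).eval 0 ^ 2 := by
  have h0 (q : MvPolynomial (Fin n) ℝ) : (lineSubst q v y).eval 0 = MvPolynomial.eval y q := by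
    simp [eval_lineSubst, MvPolynomial.aeval_eq_eval]
  simp only [derivative_lineSubst, derivative_sum, derivative_mul, derivative_C, zero_mul,
    zero_add, eval_finsetSum, eval_mul, eval_C, h0, localIP, hessNegLog, Matrix.of_apply]
  rw [sub_div, sq (Finset.sum _ _), Finset.sum_mul_sum, Finset.sum_div, Finset.mul_sum,
    Finset.sum_div, Finset.sum_comm, ← Finset.sum_sub_distrib]
  refine Finset.sum_congr rfl fun i _ => ?_
  rw [Finset.mul_sum, Finset.mul_sum, Finset.sum_div, Finset.sum_div, ← Finset.sum_sub_distrib]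
  refine Finset.sum_congr rfl fun j _ => ?_
  rcases eq_or_ne (MvPolynomial.eval y p) 0 with h | h
  · simp [h]
  · field_simp

end LineSubst

section Laguerre

open Polynomial

/-- The Laguerre expression `q'(x)² - q(x) q''(x)`, i.e. `-q(x)² (ln q)''(x)`. -/
noncomputable def laguerre {R : Type*} [CommRing R] (q : R[X]) (x : R) : R :=
  (derivative q).eval x ^ 2 - q.eval x * (derivative (derivative q)).eval x

lemma laguerre_mul {R : Type*} [CommRing R] (f g : R[X]) (x : R) :
    laguerre (f * g) x = f.eval x ^ 2 * laguerre g x + g.eval x ^ 2 * laguerre f x := by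
  simp only [laguerre, derivative_mul, derivative_add, eval_add, eval_mul]
  ring

lemma laguerre_C {R : Type*} [CommRing R] (a x : R) : laguerre (C a) x = 0 := by
  simp [laguerre]

lemma laguerre_X_sub_C {R : Type*} [CommRing R] (a x : R) : laguerre (X - C a) x = 1 := by
  simp [laguerre]

lemma laguerre_nonneg {q : ℝ[X]} (hq : q.Splits) (x : ℝ) : 0 ≤ laguerre q x := by
  obtain ⟨m, hm⟩ := splits_iff_exists_multiset.mp hq
  rw [hm, laguerre_mul, laguerre_C, mul_zero, add_zero]
  refine mul_nonneg (sq_nonneg _) ?_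
  clear hm
  induction m using Multiset.induction_on with
  | empty => simp [laguerre]
  | cons a m ih =>
    rw [Multiset.map_cons, Multiset.prod_cons, laguerre_mul, laguerre_X_sub_C]
    positivity

lemma sq_eval_le_laguerre {q : ℝ[X]} (hq : q.Splits) (hq0 : q ≠ 0) {r : ℝ} (hr : q.IsRoot r)
    (x : ℝ) : q.eval x ^ 2 ≤ (x - r) ^ 2 * laguerre q x := by
  obtain ⟨g, rfl⟩ := dvd_iff_isRoot.mpr hr
  have hg : g.Splits := hq.of_dvd hq0 (dvd_mul_left _ _)
  have := laguerre_nonneg hg x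
  rw [laguerre_mul, laguerre_X_sub_C, eval_mul, eval_sub, eval_X, eval_C, mul_pow, mul_one,
    mul_add]
  exact le_add_of_nonneg_left (by positivity)

end Laguerre

section RootContinuity

open Polynomial

lemma pow_card_le_norm_prod {ε : ℝ} (hε : 0 ≤ ε) (s : Multiset ℂ) (h : ∀ z ∈ s, ε ≤ ‖z‖) :
    ε ^ Multiset.card s ≤ ‖s.prod‖ := by
  induction s using Multiset.induction_on with
  | empty => simp
  | cons a s ih =>
    rw [Multiset.card_cons, Multiset.prod_cons, norm_mul, pow_succ']
    exact mul_le_mul (h a (Multiset.mem_cons_self a s))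
      (ih fun z hz => h z (Multiset.mem_cons_of_mem hz)) (by positivity) (norm_nonneg _)

lemma exists_root_near {q : ℂ[X]} {d : ℕ} (hdeg : q.natDegree ≤ d) (hc : q.coeff d ≠ 0) {ε : ℝ}
    (hε : 0 ≤ ε) {t₀ : ℂ} (h : ‖q.eval t₀‖ < ‖q.coeff d‖ * ε ^ d) :
    ∃ t, ‖t₀ - t‖ < ε ∧ q.eval t = 0 := by
  by_contra! hcon
  have hq0 : q ≠ 0 := by rintro rfl; simp at hc
  have hd : q.natDegree = d := le_antisymm hdeg (le_natDegree_of_ne_zero hc)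
  have hs : q.Splits := IsAlgClosed.splits q
  have hprod := pow_card_le_norm_prod hε (q.roots.map (t₀ - ·)) fun z hz => by
    obtain ⟨r, hr, rfl⟩ := Multiset.mem_map.mp hz
    by_contra! hlt
    exact hcon r hlt ((mem_roots hq0).mp hr)
  rw [Multiset.card_map, ← hs.natDegree_eq_card_roots, hd] at hprod
  rw [hs.eval_eq_prod_roots, norm_mul, leadingCoeff, hd] at h
  exact h.not_ge (mul_le_mul_of_nonneg_left hprod (norm_nonneg _))

variable {n d : ℕ} {p : MvPolynomial (Fin n) ℝ}

lemma continuous_aeval_complex (p : MvPolynomial (Fin n) ℝ) :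
    Continuous fun z : Fin n → ℂ => MvPolynomial.aeval z p := by
  simp only [MvPolynomial.aeval_def, ← MvPolynomial.eval_map]
  exact MvPolynomial.continuous_eval _

lemma exists_root_norm_le {X : Type*} [TopologicalSpace X] [CompactSpace X]
    (hp : p.IsHomogeneous d) {u : Fin n → ℂ} (hu : MvPolynomial.aeval u p ≠ 0)
    {y : X → Fin n → ℂ} (hy : Continuous y) :
    ∃ R : ℝ, ∀ s, ∀ t : ℂ, MvPolynomial.aeval (t • u + y s) p = 0 → ‖t‖ ≤ R := by
  obtain ⟨M, hM⟩ := (isCompact_univ (X := X)).exists_bound_of_continuousOn hy.continuousOn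
  obtain ⟨δ, hδ, hball⟩ := Metric.mem_nhds_iff.mp
    ((continuous_aeval_complex p).continuousAt.eventually_ne hu)
  refine ⟨max (M / δ) 0, fun s t ht => ?_⟩
  by_contra! hlt
  have ht0 : 0 < ‖t‖ := (le_max_right _ _).trans_lt hlt
  have ht0' : t ≠ 0 := norm_pos_iff.mp ht0
  refine hball (?_ : u + t⁻¹ • y s ∈ _) ?_
  · rw [mem_ball_iff_norm, add_sub_cancel_left, norm_smul, norm_inv, inv_mul_lt_iff₀ ht0]
    calc ‖y s‖ ≤ M := hM s (Set.mem_univ s)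
      _ < ‖t‖ * δ := (div_lt_iff₀ hδ).mp ((le_max_left _ _).trans_lt hlt)
  · have : t • u + y s = t • (u + t⁻¹ • y s) := by
      rw [smul_add, smul_inv_smul₀ ht0']
    rw [this, aeval_smul_of_isHomogeneous hp] at ht
    exact (mul_eq_zero.mp ht).resolve_left (pow_ne_zero d ht0')

lemma eventually_exists_root_near {X : Type*} [TopologicalSpace X] (hp : p.IsHomogeneous d)
    {u : Fin n → ℂ} (hu : MvPolynomial.aeval u p ≠ 0) {y : X → Fin n → ℂ} (hy : Continuous y)
    {s₀ : X} {t₀ : ℂ} (h₀ : MvPolynomial.aeval (t₀ • u + y s₀) p = 0) {U : Set ℂ}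
    (hU : U ∈ nhds t₀) :
    ∀ᶠ s in nhds s₀, ∃ t ∈ U, MvPolynomial.aeval (t • u + y s) p = 0 := by
  obtain ⟨ε, hε, hball⟩ := Metric.mem_nhds_iff.mp hU
  have hcont : Continuous fun s => ‖MvPolynomial.aeval (t₀ • u + y s) p‖ :=
    ((continuous_aeval_complex p).comp (hy.const_add _)).norm
  have hlt : ‖MvPolynomial.aeval (t₀ • u + y s₀) p‖ < ‖MvPolynomial.aeval u p‖ * ε ^ d := by
    rw [h₀, norm_zero]
    have := norm_pos_iff.mpr hu
    positivity
  filter_upwards [hcont.continuousAt.eventually_lt_const hlt] with s hs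
  rw [← eval_lineSubst, ← coeff_lineSubst hp u (y s)] at hs
  obtain ⟨t, ht, hroot⟩ := exists_root_near (natDegree_lineSubst_le hp u (y s))
    (by rwa [coeff_lineSubst hp]) hε.le hs
  exact ⟨t, hball (by rwa [mem_ball_iff_norm']), by rwa [eval_lineSubst] at hroot⟩

/-- Roots of `t ↦ p(t • u + y s)` cannot enter a closed set `K` along a connected compact family
if all roots in `K` are interior points of `K`. -/
lemma no_root_of_connected {X : Type*} [TopologicalSpace X] [CompactSpace X] [T2Space X]
    [PreconnectedSpace X] (hp : p.IsHomogeneous d) {u : Fin n → ℂ}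
    (hu : MvPolynomial.aeval u p ≠ 0) {y : X → Fin n → ℂ} (hy : Continuous y) {K : Set ℂ}
    (hK : IsClosed K)
    (hint : ∀ s, ∀ t ∈ K, MvPolynomial.aeval (t • u + y s) p = 0 → t ∈ interior K) {a : X}
    (ha : ∀ t ∈ K, MvPolynomial.aeval (t • u + y a) p ≠ 0) (b : X) :
    ∀ t ∈ K, MvPolynomial.aeval (t • u + y b) p ≠ 0 := by
  let A : Set X := {s | ∃ t ∈ K, MvPolynomial.aeval (t • u + y s) p = 0}
  have hopen : IsOpen A := by
    rw [isOpen_iff_mem_nhds]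
    rintro s ⟨t, htK, ht⟩
    filter_upwards [eventually_exists_root_near hp hu hy ht
      (isOpen_interior.mem_nhds (hint s t htK ht))] with s' ⟨t', ht', h'⟩
    exact ⟨t', interior_subset ht', h'⟩
  have hclosed : IsClosed A := by
    obtain ⟨R, hR⟩ := exists_root_norm_le hp hu hy
    let Z : Set (X × ℂ) := {z | z.2 ∈ K ∧ MvPolynomial.aeval (z.2 • u + y z.1) p = 0}
    have hZ : IsClosed Z := (hK.preimage continuous_snd).inter <| isClosed_eq
      ((continuous_aeval_complex p).comp (by fun_prop)) continuous_const
    have hZc : IsCompact Z :=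
      (isCompact_univ.prod (isCompact_closedBall (0 : ℂ) R)).of_isClosed_subset hZ
        fun z hz => ⟨Set.mem_univ _, mem_closedBall_zero_iff.mpr (hR _ _ hz.2)⟩
    have : A = Prod.fst '' Z := by
      ext s
      simp [A, Z]
    rw [this]
    exact (hZc.image continuous_fst).isClosed
  have hA : A = ∅ := (isClopen_iff.mp ⟨hclosed, hopen⟩).resolve_right fun h => by
    obtain ⟨t, htK, ht⟩ := h.ge (Set.mem_univ a)
    exact ha t htK ht
  exact fun t htK ht => (hA.le ⟨t, htK, ht⟩ : b ∈ (∅ : Set X)).elim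

end RootContinuity

section Hyperbolic

open Polynomial

variable {n d : ℕ} {p : MvPolynomial (Fin n) ℝ} {e e' : Fin n → ℝ}

/-- The inclusion `ℝⁿ → ℂⁿ`. -/
def complexify (x : Fin n → ℝ) : Fin n → ℂ := fun i => x i

lemma complexify_add (x y : Fin n → ℝ) : complexify (x + y) = complexify x + complexify y := by
  ext; simp [complexify]

lemma complexify_neg (x : Fin n → ℝ) : complexify (-x) = -complexify x := by
  ext; simp [complexify]

lemma complexify_smul (r : ℝ) (x : Fin n → ℝ) :
    complexify (r • x) = (r : ℂ) • complexify x := by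
  ext; simp [complexify]

lemma aeval_complexify (p : MvPolynomial (Fin n) ℝ) (x : Fin n → ℝ) :
    MvPolynomial.aeval (complexify x) p = (MvPolynomial.eval x p : ℂ) :=
  MvPolynomial.aeval_algebraMap_apply ℂ x p

lemma aeval_conj (p : MvPolynomial (Fin n) ℝ) (z : Fin n → ℂ) :
    MvPolynomial.aeval (fun i => starRingEnd ℂ (z i)) p =
      starRingEnd ℂ (MvPolynomial.aeval z p) := by
  induction p using MvPolynomial.induction_on with
  | C a => simp
  | add p q hp hq => simp_all
  | mul_X p i hp => simp_all

lemma hypCharPoly_eq_lineSubst (p : MvPolynomial (Fin n) ℝ) (e x : Fin n → ℝ) :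
    hypCharPoly p e x = lineSubst p e (-x) := by
  simp [hypCharPoly, lineSubst, sub_eq_add_neg]

lemma IsHyperbolicPoly.aeval_complexify_ne_zero (hp : IsHyperbolicPoly p e d) :
    MvPolynomial.aeval (complexify e) p ≠ 0 := by
  rw [aeval_complexify]
  exact_mod_cast hp.2.1

lemma IsHyperbolicPoly.hypCharPoly_ne_zero (hp : IsHyperbolicPoly p e d) (x : Fin n → ℝ) :
    hypCharPoly p e x ≠ 0 := by
  rw [hypCharPoly_eq_lineSubst]
  exact lineSubst_ne_zero hp.1 (by simpa [MvPolynomial.aeval_eq_eval] using hp.2.1) _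

lemma IsHyperbolicPoly.splits_hypCharPoly (hp : IsHyperbolicPoly p e d) (x : Fin n → ℝ) :
    (hypCharPoly p e x).Splits := by
  refine splits_iff_card_roots.mpr (le_antisymm (card_roots' _) ?_)
  rw [hp.2.2 x, hypCharPoly_eq_lineSubst]
  exact natDegree_lineSubst_le hp.1 _ _

lemma IsHyperbolicPoly.exists_root_eq (hp : IsHyperbolicPoly p e d) {x : Fin n → ℝ} {w : ℂ}
    (h : MvPolynomial.aeval (w • complexify e - complexify x) p = 0) :
    ∃ r ∈ (hypCharPoly p e x).roots, (r : ℂ) = w := by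
  have h0 := hp.hypCharPoly_ne_zero x
  have hroot : ((hypCharPoly p e x).map (algebraMap ℝ ℂ)).IsRoot w := by
    rw [hypCharPoly_eq_lineSubst, lineSubst_map, IsRoot, eval_lineSubst]
    rwa [sub_eq_add_neg, ← complexify_neg] at h
  obtain ⟨r, rfl⟩ := (hp.splits_hypCharPoly x).mem_range_of_isRoot h0 hroot
  refine ⟨r, (mem_roots h0).mpr ?_, rfl⟩
  exact hroot.of_map (algebraMap ℝ ℂ).injective

lemma IsHyperbolicPoly.exists_neg_root_eq (hp : IsHyperbolicPoly p e d) {x : Fin n → ℝ} {w : ℂ}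
    (h : MvPolynomial.aeval (w • complexify e + complexify x) p = 0) :
    ∃ r ∈ (hypCharPoly p e x).roots, ((-r : ℝ) : ℂ) = w := by
  have h' : MvPolynomial.aeval ((-w) • complexify e - complexify x) p = 0 := by
    rw [show (-w) • complexify e - complexify x = (-1 : ℂ) • (w • complexify e + complexify x) by
      module, aeval_smul_of_isHomogeneous hp.1, h, mul_zero]
  obtain ⟨r, hr, hrw⟩ := hp.exists_root_eq h'
  exact ⟨r, hr, by simp [hrw]⟩

lemma IsHyperbolicPoly.im_eq_zero (hp : IsHyperbolicPoly p e d) {x : Fin n → ℝ} {w : ℂ}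
    (h : MvPolynomial.aeval (w • complexify e + complexify x) p = 0) : w.im = 0 := by
  obtain ⟨r, -, rfl⟩ := hp.exists_neg_root_eq h
  simp

lemma IsHyperbolicPoly.eval_ne_zero_of_mem_hypConeOpen (hp : IsHyperbolicPoly p e d)
    (he' : e' ∈ hypConeOpen p e) : MvPolynomial.eval e' p ≠ 0 := by
  intro h
  obtain ⟨r, hr, hr0⟩ := hp.exists_root_eq (x := e') (w := 0) (by
    rw [zero_smul, zero_sub, ← neg_one_smul ℂ, aeval_smul_of_isHomogeneous hp.1,
      aeval_complexify, h, Complex.ofReal_zero, mul_zero])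
  exact (he' r hr).ne' (by exact_mod_cast hr0)

/-- Moving into the complex domain in direction `i e` pushes all roots along `e'` into the
lower half-plane. -/
lemma IsHyperbolicPoly.im_neg_of_root (hp : IsHyperbolicPoly p e d)
    (he' : e' ∈ hypConeOpen p e) (x : Fin n → ℝ) {α : ℝ} (hα : 0 < α) {t : ℂ}
    (h : MvPolynomial.aeval
      (t • complexify e' + ((α * Complex.I : ℂ) • complexify e + complexify x)) p = 0) :
    t.im < 0 := by
  have hu : MvPolynomial.aeval (complexify e') p ≠ 0 := by
    rw [aeval_complexify]
    exact_mod_cast hp.eval_ne_zero_of_mem_hypConeOpen he'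
  let y : unitInterval → Fin n → ℂ := fun s =>
    (α * Complex.I : ℂ) • complexify e + complexify ((s : ℝ) • x)
  have hy : Continuous y := by
    simp only [y, complexify_smul]
    fun_prop
  by_contra! ht
  refine no_root_of_connected hp.1 hu hy (K := {z | 0 ≤ z.im})
    (isClosed_le continuous_const Complex.continuous_im) ?_ (a := 0) ?_ 1 t ht (by simpa [y] using h)
  · intro s z hz hz0
    rw [Complex.interior_setOfPred_le_im]
    refine lt_of_le_of_ne (show 0 ≤ z.im from hz) fun him => ?_
    have hzr : z = (z.re : ℂ) := by
      apply Complex.ext <;> simp [← him]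
    have := hp.im_eq_zero (x := z.re • e' + (s : ℝ) • x) (w := α * Complex.I) (by
      rw [complexify_add, complexify_smul, ← hzr, ← hz0]
      congr 2
      simp only [y]
      abel)
    simp at this
    exact hα.ne' this
  · intro z hz hz0
    have hz0' : z ≠ 0 := by
      rintro rfl
      simp only [y, Set.Icc.coe_zero, zero_smul, complexify_smul, Complex.ofReal_zero,
        zero_add, add_zero, aeval_smul_of_isHomogeneous hp.1] at hz0
      exact (mul_ne_zero (pow_ne_zero _ (by simp [hα.ne'])) hp.aeval_complexify_ne_zero) hz0
    obtain ⟨r, hr, hrw⟩ := hp.exists_neg_root_eq (x := e') (w := z⁻¹ * (α * Complex.I)) (by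
      have : (z⁻¹ * (α * Complex.I)) • complexify e + complexify e' =
          z⁻¹ • (z • complexify e' + y 0) := by
        simp [y, complexify_smul, smul_add, smul_smul, hz0', add_comm]
      rw [this, aeval_smul_of_isHomogeneous hp.1, hz0, mul_zero])
    have hrpos := he' r hr
    have hz' : (-r : ℂ) * z = α * Complex.I := by
      rw [← Complex.ofReal_neg, hrw]
      field_simp
    have him : -r * z.im = α := by simpa using congrArg Complex.im hz'
    have hz : 0 ≤ z.im := hz
    nlinarith

lemma IsHyperbolicPoly.im_nonpos_of_root (hp : IsHyperbolicPoly p e d)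
    (he' : e' ∈ hypConeOpen p e) (x : Fin n → ℝ) {t : ℂ}
    (h : MvPolynomial.aeval (t • complexify e' + complexify x) p = 0) : t.im ≤ 0 := by
  by_contra! ht
  have hu : MvPolynomial.aeval (complexify e') p ≠ 0 := by
    rw [aeval_complexify]
    exact_mod_cast hp.eval_ne_zero_of_mem_hypConeOpen he'
  have hev := eventually_exists_root_near hp.1 hu
    (y := fun α : ℝ => (α * Complex.I : ℂ) • complexify e + complexify x) (by fun_prop)
    (s₀ := 0) (t₀ := t) (by simpa using h) (U := {z | 0 < z.im})
    ((isOpen_lt continuous_const Complex.continuous_im).mem_nhds ht)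
  obtain ⟨α, ⟨z, hz, hroot⟩, hα⟩ :=
    ((hev.filter_mono nhdsWithin_le_nhds).and (self_mem_nhdsWithin (s := Set.Ioi (0 : ℝ)))).exists
  exact lt_asymm hz (hp.im_neg_of_root he' x hα hroot)

/-- Gårding: `p` is hyperbolic in every direction of the open hyperbolicity cone. -/
lemma IsHyperbolicPoly.im_eq_zero_of_mem_hypConeOpen (hp : IsHyperbolicPoly p e d)
    (he' : e' ∈ hypConeOpen p e) (x : Fin n → ℝ) {t : ℂ}
    (h : MvPolynomial.aeval (t • complexify e' + complexify x) p = 0) : t.im = 0 := by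
  refine le_antisymm (hp.im_nonpos_of_root he' x h) ?_
  have h' : MvPolynomial.aeval (starRingEnd ℂ t • complexify e' + complexify x) p = 0 := by
    have := aeval_conj p (t • complexify e' + complexify x)
    rw [h, map_zero] at this
    rw [← this]
    congr 2
    ext i
    simp [complexify]
  simpa using hp.im_nonpos_of_root he' x h'

lemma IsHyperbolicPoly.splits_lineSubst (hp : IsHyperbolicPoly p e d)
    (he' : e' ∈ hypConeOpen p e) (v : Fin n → ℝ) : (lineSubst p v e').Splits := by
  refine Splits.of_splits_map (algebraMap ℝ ℂ) (IsAlgClosed.splits _) fun s hs => ?_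
  have hs : MvPolynomial.aeval (s • complexify v + complexify e') p = 0 := by
    rw [lineSubst_map] at hs
    rw [← eval_lineSubst]
    exact isRoot_of_mem_roots hs
  rcases eq_or_ne s 0 with rfl | hs0
  · exact zero_mem _
  have him := hp.im_eq_zero_of_mem_hypConeOpen he' v (t := s⁻¹) (by
    rw [show s⁻¹ • complexify e' + complexify v = s⁻¹ • (s • complexify v + complexify e') by
      rw [smul_add, inv_smul_smul₀ hs0, add_comm], aeval_smul_of_isHomogeneous hp.1, hs, mul_zero])
  have hs' : s.im = 0 := by
    simpa [Complex.inv_im, hs0] using him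
  exact ⟨s.re, Complex.ext (by simp) (by simp [hs'])⟩

/-- The segment from a point of the open cone to `x` stays in the cone if `p` does not vanish
on it. -/
lemma IsHyperbolicPoly.mem_hypConeOpen_of_segment (hp : IsHyperbolicPoly p e d)
    (he' : e' ∈ hypConeOpen p e) {v : Fin n → ℝ}
    (hv : ∀ s ∈ Set.Icc (0 : ℝ) 1, MvPolynomial.eval (e' + s • v) p ≠ 0) :
    e' + v ∈ hypConeOpen p e := by
  intro r hr
  by_contra! hr0
  let y : unitInterval → Fin n → ℂ := fun s => complexify (e' + (s : ℝ) • v)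
  have hy : Continuous y := by
    simp only [y, complexify_add, complexify_smul]
    fun_prop
  refine no_root_of_connected hp.1 hp.aeval_complexify_ne_zero hy (K := {z | 0 ≤ z.re})
    (isClosed_le continuous_const Complex.continuous_re) ?_ (a := 0) ?_ 1 ((-r : ℝ) : ℂ)
    (by simpa using hr0) ?_
  · intro s z hz hz0
    rw [Complex.interior_setOfPred_le_re]
    refine lt_of_le_of_ne (show 0 ≤ z.re from hz) fun hre => ?_
    have hz' : z = 0 := Complex.ext hre.symm (hp.im_eq_zero hz0)
    rw [hz', zero_smul, zero_add, aeval_complexify] at hz0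
    exact hv s s.2 (by exact_mod_cast hz0)
  · intro z hz hz0
    obtain ⟨a, ha, rfl⟩ := hp.exists_neg_root_eq (x := e') (by simpa [y] using hz0)
    have := he' a ha
    have hz : 0 ≤ ((-a : ℝ) : ℂ).re := hz
    rw [Complex.ofReal_re] at hz
    linarith
  · have h := isRoot_of_mem_roots hr
    rw [hypCharPoly_eq_lineSubst, IsRoot, eval_lineSubst, MvPolynomial.aeval_eq_eval] at h
    have : ((-r : ℝ) : ℂ) • complexify e + y 1 = (-1 : ℂ) • complexify (r • e + -(e' + v)) := by
      simp [y, complexify_add, complexify_smul, complexify_neg, add_comm]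
    rw [this, aeval_smul_of_isHomogeneous hp.1, aeval_complexify, show MvPolynomial.eval _ p = 0 from h, Complex.ofReal_zero, mul_zero]

lemma localIP_self_of_isHomogeneous (hp : p.IsHomogeneous d) {y : Fin n → ℝ}
    (hy : MvPolynomial.eval y p ≠ 0) : localIP p y y y = d := by
  have h : lineSubst p y y = C (MvPolynomial.eval y p) * (X + C 1) ^ d := by
    refine Polynomial.funext fun t => ?_
    rw [eval_lineSubst, show t • y + y = (t + 1) • y by rw [add_smul, one_smul],
      aeval_smul_of_isHomogeneous hp, MvPolynomial.aeval_eq_eval]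
    simp [mul_comm]
  rw [localIP_eq_lineSubst, h]
  rcases d with _ | d
  · simp
  · simp only [derivative_C_mul, derivative_X_add_C_pow, eval_mul, eval_C, eval_pow, eval_add,
      eval_X, zero_add, one_pow, mul_one, Nat.add_sub_cancel]
    push_cast
    field_simp
    ring

lemma IsHyperbolicPoly.eval_add_smul_ne_zero (hp : IsHyperbolicPoly p e d)
    (he' : e' ∈ hypConeOpen p e) {v : Fin n → ℝ} (hv : localIP p e' v v < 1) {s : ℝ}
    (hs : s ∈ Set.Icc (0 : ℝ) 1) : MvPolynomial.eval (e' + s • v) p ≠ 0 := by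
  intro h
  have he0 := hp.eval_ne_zero_of_mem_hypConeOpen he'
  have hq0 : (lineSubst p v e').eval 0 = MvPolynomial.eval e' p := by
    simp [eval_lineSubst, MvPolynomial.aeval_eq_eval]
  have hne : lineSubst p v e' ≠ 0 := by
    intro h0
    rw [h0, eval_zero] at hq0
    exact he0 hq0.symm
  have hroot : (lineSubst p v e').IsRoot s := by
    rw [IsRoot, eval_lineSubst, MvPolynomial.aeval_eq_eval, add_comm]
    exact h
  have hsplits := hp.splits_lineSubst he' v
  have hle := sq_eval_le_laguerre hsplits hne hroot 0
  have hnonneg := laguerre_nonneg hsplits 0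
  rw [localIP_eq_lineSubst, ← laguerre, hq0, div_lt_one (by positivity)] at hv
  rw [hq0] at hle
  have hs1 : (0 - s) ^ 2 ≤ 1 := by nlinarith [hs.1, hs.2]
  exact (hle.trans (mul_le_of_le_one_left hnonneg hs1)).not_gt hv

end Hyperbolic

/-- Proposition 8.8 in RS14.
For every `e' ∈ Λ₊₊`: (i) `e'ᵀ H(e') e' = d`, i.e. `‖e'‖_{e'} = √d`, and
(ii) the open local unit ball around `e'` is contained in `Λ₊₊`. -/
theorem stmt6 {n d : ℕ} (hd : 1 ≤ d) (p : MvPolynomial (Fin n) ℝ) (e : Fin n → ℝ)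
    (hp : IsHyperbolicPoly p e d) (hpe : 0 < MvPolynomial.eval e p) :
    ∀ e' ∈ hypConeOpen p e,
      (localIP p e' e' e' = (d : ℝ) ∧ localNorm p e' e' = Real.sqrt d) ∧
      ∀ x : Fin n → ℝ, localIP p e' (x - e') (x - e') < 1 → x ∈ hypConeOpen p e := by
  intro e' he'
  have h := localIP_self_of_isHomogeneous hp.1 (hp.eval_ne_zero_of_mem_hypConeOpen he')
  refine ⟨⟨h, by rw [localNorm, h]⟩, fun x hx => ?_⟩
  simpa using hp.mem_hypConeOpen_of_segment he' fun s hs => hp.eval_add_smul_ne_zero he' hx hs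
end
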